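/- Let t ≥ 3 be an odd integer, let M be a matroid, and let e_1, e_2, …, e_n be an odd t-cyclic ordering of M. Let P = {e_{i+1}, e_{i+2}, …, e_{i+k}} be a set of k consecutive elements with |P| ≥ t−1 and |E(M) − P| ≥ t−1. Then (with parity of indices taken modulo n, which is even): r(P) = (|P| + t − 1)/2 if |P| is even; r(P) = (|P| + t − 2)/2 if i+1 is odd and |P| is odd; and r(P) = (|P| + t)/2 if i+1 is even and |P| is odd. -/

import Mathlib

open Set

namespace CyclicArr

variable {α : Type*}

/-- `C` is a circuit of the matroid `M`: a minimal dependent set. -/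
def Cct (M : Matroid α) (C : Set α) : Prop := Minimal M.Dep C

/-- The set of `len` consecutive elements `{e_i, e_{i+1}, …, e_{i+len-1}}`
in a cyclic ordering `e`, subscripts mod `n`. -/
def seg {n : ℕ} (e : ZMod n → α) (i : ℤ) (len : ℕ) : Set α :=
  (fun k : ℕ => e ((i + k : ℤ) : ZMod n)) '' Set.Iio len

/-- `e` is a cyclic ordering of (the ground set of) `M`. -/
def CyclicOrd {n : ℕ} (M : Matroid α) (e : ZMod n → α) : Prop :=
  Function.Injective e ∧ Set.range e = M.E

/-- `e` is a cyclic `(t-1, t)`-ordering of `M`: every `t-1` consecutive elements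
are contained in a `t`-element circuit and a `t`-element cocircuit. -/
def CyclicPropOrd {n : ℕ} (M : Matroid α) (t : ℕ) (e : ZMod n → α) : Prop :=
  CyclicOrd M e ∧
  ∀ i : ℤ, (∃ C, Cct M C ∧ C.ncard = t ∧ seg e i (t-1) ⊆ C) ∧
           (∃ C, Cct M✶ C ∧ C.ncard = t ∧ seg e i (t-1) ⊆ C)

/-- `M` has the cyclic `(t-1, t)`-property: it admits a cyclic `(t-1, t)`-ordering. -/
def HasCycProp (M : Matroid α) (t : ℕ) : Prop :=
  ∃ (n : ℕ) (e : ZMod n → α), CyclicPropOrd M t e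

/-- `e` is an odd `t`-cyclic ordering of `M` (with `n ≥ t+1`): for all odd `i ∈ {1,…,n}`,
`{e_i, …, e_{i+t-1}}` is a `t`-element circuit and `{e_{i+1}, …, e_{i+t}}` is a
`t`-element cocircuit. -/
def OddTCycOrd {n : ℕ} (M : Matroid α) (t : ℕ) (e : ZMod n → α) : Prop :=
  CyclicOrd M e ∧ t + 1 ≤ n ∧
  ∀ i : ℕ, Odd i → 1 ≤ i → i ≤ n →
    (Cct M (seg e (i : ℤ) t) ∧ (seg e (i : ℤ) t).ncard = t) ∧
    (Cct M✶ (seg e ((i : ℤ) + 1) t) ∧ (seg e ((i : ℤ) + 1) t).ncard = t)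

/-- `e` is an even `t`-cyclic ordering of `M` (with `n ≥ t+1`): for all odd `i ∈ {1,…,n}`,
`{e_i, …, e_{i+t-1}}` is both a `t`-element circuit and a `t`-element cocircuit. -/
def EvenTCycOrd {n : ℕ} (M : Matroid α) (t : ℕ) (e : ZMod n → α) : Prop :=
  CyclicOrd M e ∧ t + 1 ≤ n ∧
  ∀ i : ℕ, Odd i → 1 ≤ i → i ≤ n →
    Cct M (seg e (i : ℤ) t) ∧ Cct M✶ (seg e (i : ℤ) t) ∧ (seg e (i : ℤ) t).ncard = t

/-- `M` is `t`-cyclic: it admits an odd or even `t`-cyclic ordering. -/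
def TCyclic (M : Matroid α) (t : ℕ) : Prop :=
  ∃ (n : ℕ) (e : ZMod n → α), OddTCycOrd M t e ∨ EvenTCycOrd M t e

/-- The rank of a set `X` in a matroid `M`: the maximum cardinality of an
independent subset of `X` (for a finite matroid). -/
noncomputable def rkf (M : Matroid α) (X : Set α) : ℕ :=
  sSup {k | ∃ I, M.Indep I ∧ I ⊆ X ∧ I.ncard = k}

/-- The connectivity function `λ(X) = r(X) + r*(X) - |X|`, valued in `ℤ`. -/
noncomputable def lam (M : Matroid α) (X : Set α) : ℤ :=
  (rkf M X : ℤ) + (rkf M✶ X : ℤ) - (X.ncard : ℤ)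

/-- The local connectivity `⊓(X, Y) = r(X) + r(Y) - r(X ∪ Y)`, valued in `ℤ`. -/
noncomputable def pic (M : Matroid α) (X Y : Set α) : ℤ :=
  (rkf M X : ℤ) + (rkf M Y : ℤ) - (rkf M (X ∪ Y) : ℤ)

/-- `X` is exactly `k`-separating: `λ(X) = k - 1`. -/
noncomputable def ExactSep (M : Matroid α) (k : ℕ) (X : Set α) : Prop :=
  lam M X = (k : ℤ) - 1

/-- `(P_1, …, P_m)` is a concatenation of the cyclic ordering `e`, where `P i` is the
block of `l i` consecutive elements starting at position `a i`, and the blocks occur in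
cyclic order and partition the ground set. -/
def IsConcat {n m : ℕ} (e : ZMod n → α) (P : ZMod m → Set α) (a l : ZMod m → ℕ) : Prop :=
  (∀ i, 1 ≤ l i) ∧
  (∀ i, ((a (i + 1) : ZMod n)) = ((a i + l i : ℕ) : ZMod n)) ∧
  (∀ i, P i = seg e (a i : ℤ) (l i)) ∧
  Set.univ.PairwiseDisjoint P ∧
  (⋃ i, P i) = Set.range e

/-- `(P_1, …, P_m)` is a `k`-flower of `M`: a partition of the ground set into nonempty
sets, each exactly `k`-separating, with consecutive unions exactly `k`-separating. -/
noncomputable def IsFlower (M : Matroid α) (k : ℕ) {m : ℕ} (P : ZMod m → Set α) : Prop :=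
  2 ≤ m ∧
  Set.univ.PairwiseDisjoint P ∧ (⋃ i, P i) = M.E ∧
  (∀ i, (P i).Nonempty) ∧
  (∀ i, ExactSep M k (P i)) ∧
  (3 ≤ m → ∀ i, ExactSep M k (P i ∪ P (i + 1)))

/-- `I ⊆ ZMod m` is a set of consecutive members in the cyclic order. -/
def CycInterval {m : ℕ} (I : Set (ZMod m)) : Prop :=
  ∃ (a : ZMod m) (len : ℕ), 0 < len ∧ I = (fun k : ℕ => a + (k : ZMod m)) '' Set.Iio len

/-- A `k`-daisy: a `k`-flower in which the union of a proper nonempty collection of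
petals is exactly `k`-separating precisely when the petals are consecutive. -/
noncomputable def IsDaisy (M : Matroid α) (k : ℕ) {m : ℕ} (P : ZMod m → Set α) : Prop :=
  IsFlower M k P ∧
  ∀ I : Set (ZMod m), I.Nonempty → I ≠ Set.univ →
    (ExactSep M k (⋃ i ∈ I, P i) ↔ CycInterval I)

/-- A `k`-anemone: a `k`-flower in which the union of every proper nonempty collection
of petals is exactly `k`-separating. -/
noncomputable def IsAnemone (M : Matroid α) (k : ℕ) {m : ℕ} (P : ZMod m → Set α) : Prop :=
  IsFlower M k P ∧
  ∀ I : Set (ZMod m), I.Nonempty → I ≠ Set.univ → ExactSep M k (⋃ i ∈ I, P i)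

/-!
A circuit and a cocircuit never meet in exactly one element. This forces `n` to be even, so that
circuits start at every odd index and cocircuits at every even index, also across `e_n, e_1`.
Now adjoin the elements of a segment one at a time. If `s + k` is even, then `e_{s+k}` is the first
element of a cocircuit that avoids `e_s, …, e_{s+k-1}`, so it is not spanned by them and the rank
goes up by one. If `s + k` is odd and `k ≥ t - 1`, then `e_{s+k}` is the last element of a circuit
contained in `{e_s, …, e_{s+k}}`, so the rank does not change. Hence each further pair of elements
adds exactly one to the rank, starting from the value `t - 1` on the segments of length `t - 1`,
which are independent as proper subsets of circuits.
-/

lemma mem_closure_of_isCircuit_of_subset_insert {M : Matroid α} {C X : Set α} {x : α}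
    (hC : M.IsCircuit C) (hx : x ∈ C) (hCX : C ⊆ insert x X) : x ∈ M.closure X :=
  M.closure_subset_closure (sdiff_singleton_subset_iff.2 hCX)
    (hC.mem_closure_sdiff_singleton_of_mem hx)

lemma notMem_closure_of_isCocircuit_of_disjoint {M : Matroid α} {K X : Set α} {x : α}
    (hK : M.IsCocircuit K) (hx : x ∈ K) (hXK : Disjoint X K) : x ∉ M.closure X := by
  intro hcl
  obtain ⟨C, hCX, hC, hxC⟩ :=
    Matroid.exists_isCircuit_of_mem_closure hcl fun hxX ↦ disjoint_left.1 hXK hxX hx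
  refine hC.inter_isCocircuit_ne_singleton (e := x) hK (Subset.antisymm ?_ ?_)
  · rintro y ⟨hyC, hyK⟩
    exact (hCX hyC).resolve_right fun hyX ↦ disjoint_left.1 hXK hyX hyK
  · exact singleton_subset_iff.2 ⟨hxC, hx⟩

lemma encard_le_eRank_add_one_of_isCircuit {M : Matroid α} {C : Set α} (hC : M.IsCircuit C) :
    C.encard ≤ M.eRank + 1 := by
  rw [← hC.eRk_add_one_eq]
  gcongr
  exact M.eRk_le_eRank C

lemma cast_rkf_eq_eRk {M : Matroid α} {X : Set α} (hX : X.Finite) :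
    (rkf M X : ℕ∞) = M.eRk X := by
  obtain ⟨B, hB⟩ := M.exists_isBasis' X
  have hgreatest : IsGreatest {k | ∃ I, M.Indep I ∧ I ⊆ X ∧ I.ncard = k} B.ncard := by
    refine ⟨⟨B, hB.indep, hB.subset, rfl⟩, ?_⟩
    rintro _ ⟨I, hI, hIX, rfl⟩
    have hle : I.encard ≤ B.encard := hB.encard_eq_eRk ▸ hI.encard_le_eRk_of_subset hIX
    exact ENat.toNat_le_toNat hle (hX.subset hB.subset).encard_lt_top.ne
  rw [rkf, hgreatest.csSup_eq, (hX.subset hB.subset).cast_ncard_eq, hB.encard_eq_eRk]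

section Segment

variable {n : ℕ} {e : ZMod n → α} {s j : ℤ} {k l : ℕ}

lemma mem_seg {x : α} : x ∈ seg e s k ↔ ∃ a : ℕ, a < k ∧ e ((s + a : ℤ) : ZMod n) = x :=
  Iff.rfl

lemma finite_seg : (seg e s k).Finite :=
  (finite_Iio k).image _

lemma seg_subset_range : seg e s k ⊆ range e := by
  rintro _ ⟨a, -, rfl⟩
  exact mem_range_self _

lemma seg_congr (h : (s : ZMod n) = j) : seg e s k = seg e j k := by
  simp only [seg, Int.cast_add, h]

lemma seg_subset_seg (hs : j ≤ s) (hend : s + k ≤ j + l) : seg e s k ⊆ seg e j l := by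
  rintro _ ⟨a, ha, rfl⟩
  rw [mem_Iio] at ha
  refine ⟨(s - j + a).toNat, by rw [mem_Iio]; omega, ?_⟩
  dsimp only
  congr 2
  omega

lemma seg_succ : seg e s (k + 1) = insert (e ((s + k : ℤ) : ZMod n)) (seg e s k) := by
  rw [seg, ← Order.succ_eq_add_one, Order.Iio_succ_eq_insert, image_insert_eq, seg]

lemma eq_of_apply_intCast_eq (he : e.Injective) (h : e (s : ZMod n) = e (j : ZMod n))
    (hlt : |s - j| < n) : s = j := by
  have hdvd : (n : ℤ) ∣ s - j := (ZMod.intCast_eq_intCast_iff_dvd_sub j s n).1 (he h).symm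
  exact sub_eq_zero.1 (Int.eq_zero_of_abs_lt_dvd hdvd hlt)

lemma ncard_seg (he : e.Injective) (hk : k ≤ n) : (seg e s k).ncard = k := by
  rw [seg, InjOn.ncard_image, ncard_Iio_nat]
  intro a ha b hb hab
  rw [mem_Iio] at ha hb
  have := eq_of_apply_intCast_eq he hab (by rw [abs_lt]; omega)
  omega

lemma disjoint_seg_seg_add (he : e.Injective) (hkl : k + l ≤ n) :
    Disjoint (seg e s k) (seg e (s + k) l) := by
  rw [disjoint_left]
  rintro _ ⟨a, ha, rfl⟩ ⟨b, hb, hab⟩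
  rw [mem_Iio] at ha hb
  have := eq_of_apply_intCast_eq he hab (by rw [abs_lt]; omega)
  omega

end Segment

section Matroid

variable {M : Matroid α} {n t : ℕ} {e : ZMod n → α} {s j : ℤ} {k : ℕ}

lemma indep_seg_of_isCircuit_seg (he : e.Injective) (htn : t ≤ n) (hC : M.IsCircuit (seg e j t))
    (hkt : k < t) (hs : j ≤ s) (hend : s + k ≤ j + t) : M.Indep (seg e s k) := by
  refine hC.ssubset_indep ((seg_subset_seg hs hend).ssubset_of_ne fun heq ↦ hkt.ne ?_)
  rw [← ncard_seg he (hkt.le.trans htn) (s := s), heq, ncard_seg he htn]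

lemma mem_closure_seg_of_isCircuit_seg (hC : M.IsCircuit (seg e j t)) (ht : 0 < t) (hs : s ≤ j)
    (hend : j + t = s + k + 1) : e ((s + k : ℤ) : ZMod n) ∈ M.closure (seg e s k) := by
  refine mem_closure_of_isCircuit_of_subset_insert hC ?_ ?_
  · exact mem_seg.2 ⟨t - 1, by omega, by congr 2; omega⟩
  · rw [← seg_succ]
    exact seg_subset_seg hs (by push_cast; omega)

lemma notMem_closure_seg_of_isCocircuit_seg (he : e.Injective)
    (hK : M.IsCocircuit (seg e (s + k) t)) (ht : 0 < t) (hkt : k + t ≤ n) :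
    e ((s + k : ℤ) : ZMod n) ∉ M.closure (seg e s k) :=
  notMem_closure_of_isCocircuit_of_disjoint hK (mem_seg.2 ⟨0, ht, by simp⟩)
    (disjoint_seg_seg_add he hkt)

namespace CyclicOrd

lemma ncard_ground (h : CyclicOrd M e) : M.E.ncard = n := by
  rw [← h.2, ncard_range_of_injective h.1, Nat.card_zmod]

lemma ncard_ground_sdiff_seg (h : CyclicOrd M e) (hk : k ≤ n) :
    (M.E \ seg e s k).ncard = n - k := by
  rw [ncard_sdiff (h.2 ▸ seg_subset_range) finite_seg, h.ncard_ground, ncard_seg h.1 hk]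

end CyclicOrd

namespace OddTCycOrd

lemma two_mul_le (h : OddTCycOrd M t e) : 2 * t ≤ n + 2 := by
  obtain ⟨hord, htn, hseg⟩ := h
  obtain ⟨⟨hC, -⟩, ⟨hK, -⟩⟩ := hseg 1 odd_one le_rfl (by omega)
  have encard_seg (s : ℤ) : (seg e s t).encard = t := by
    rw [← finite_seg.cast_ncard_eq, ncard_seg hord.1 (by omega)]
  have encard_ground : M.E.encard = n := by
    rw [← (finite_of_ncard_pos (by rw [hord.ncard_ground]; omega)).cast_ncard_eq,
      hord.ncard_ground]
  have hbound : (t + t : ℕ∞) ≤ n + 2 := calc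
    (t + t : ℕ∞) ≤ (M.eRank + 1) + (M✶.eRank + 1) := by
      gcongr
      · exact encard_seg _ ▸ encard_le_eRank_add_one_of_isCircuit hC
      · exact encard_seg _ ▸ encard_le_eRank_add_one_of_isCircuit hK
    _ = n + 2 := by rw [add_add_add_comm, M.eRank_add_eRank_dual, encard_ground, one_add_one_eq_two]
  rw [two_mul]
  exact_mod_cast hbound

lemma even_card (h : OddTCycOrd M t e) (ht : Odd t) : Even n := by
  have hbound := h.two_mul_le
  obtain ⟨hord, htn, hseg⟩ := h
  by_contra hn
  rw [Nat.not_even_iff_odd] at hn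
  rw [Nat.odd_iff] at ht hn
  -- Otherwise the cocircuit ending at `e_{n+1}` would meet the circuit starting at `e_1 = e_{n+1}`
  -- in this single element.
  have hC : M.IsCircuit (seg e ((n + 2 - t : ℤ) + (t - 1 : ℕ)) t) := by
    have hcast : ((((n + 2 - t : ℤ) + (t - 1 : ℕ) : ℤ)) : ZMod n) = ((1 : ℕ) : ℤ) := by
      rw [show (n + 2 - t : ℤ) + (t - 1 : ℕ) = n + 1 by omega]
      simp
    rw [seg_congr hcast]
    exact (hseg 1 odd_one le_rfl (by omega)).1.1
  have hK : M✶.IsCircuit (seg e (n + 2 - t : ℤ) t) := by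
    rw [show (n + 2 - t : ℤ) = (n + 1 - t : ℕ) + 1 by omega]
    exact (hseg (n + 1 - t) (by rw [Nat.odd_iff]; omega) (by omega) (by omega)).2.1
  exact notMem_closure_seg_of_isCocircuit_seg hord.1 hC.isCocircuit (by omega) (by omega)
    (mem_closure_seg_of_isCircuit_seg hK (by omega) le_rfl (by omega))

lemma exists_intCast_eq_of_odd (h : OddTCycOrd M t e) (ht : Odd t) (hs : Odd s) :
    ∃ i : ℕ, Odd i ∧ 1 ≤ i ∧ i ≤ n ∧ (s : ZMod n) = ((i : ℤ) : ZMod n) := by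
  have hn : (0 : ℤ) < n := by have := h.2.1; omega
  have hlt := Int.emod_lt_of_pos s hn
  lift s % n to ℕ using Int.emod_nonneg s hn.ne' with i hi
  have hodd : Odd i := by
    have hdvd : (2 : ℤ) ∣ n := by exact_mod_cast (h.even_card ht).two_dvd
    rw [← Int.odd_coe_nat, hi, Int.odd_iff, Int.emod_emod_of_dvd s hdvd]
    exact Int.odd_iff.1 hs
  exact ⟨i, hodd, hodd.pos, by omega, by rw [hi, ZMod.intCast_mod]⟩

lemma isCircuit_seg (h : OddTCycOrd M t e) (ht : Odd t) (hs : Odd s) :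
    M.IsCircuit (seg e s t) := by
  obtain ⟨i, hodd, hpos, hle, hcast⟩ := h.exists_intCast_eq_of_odd ht hs
  rw [seg_congr hcast]
  exact (h.2.2 i hodd hpos hle).1.1

lemma isCocircuit_seg (h : OddTCycOrd M t e) (ht : Odd t) (hs : Even s) :
    M.IsCocircuit (seg e s t) := by
  obtain ⟨i, hodd, hpos, hle, hcast⟩ := h.exists_intCast_eq_of_odd ht (hs.sub_odd odd_one)
  have hcast_succ : (s : ZMod n) = ((i + 1 : ℤ) : ZMod n) := by
    rw [Int.cast_add, ← hcast]
    simp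
  rw [seg_congr hcast_succ]
  exact (h.2.2 i hodd hpos hle).2.1

lemma indep_seg (h : OddTCycOrd M t e) (ht : Odd t) : M.Indep (seg e s (t - 1)) := by
  have htn := h.2.1
  have hpos := ht.pos
  rcases Int.even_or_odd s with hs | hs
  · exact indep_seg_of_isCircuit_seg h.1.1 (by omega) (h.isCircuit_seg ht (hs.sub_odd odd_one))
      (by omega) (by omega) (by omega)
  · exact indep_seg_of_isCircuit_seg h.1.1 (by omega) (h.isCircuit_seg ht hs)
      (by omega) (by omega) (by omega)

lemma eRk_seg_succ_of_odd (h : OddTCycOrd M t e) (ht : Odd t) (hsk : Odd (s + k))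
    (hk : t - 1 ≤ k) : M.eRk (seg e s (k + 1)) = M.eRk (seg e s k) := by
  have hpos := ht.pos
  have hstart : Odd (s + k + 1 - t) := by
    rw [Nat.odd_iff] at ht
    rw [Int.odd_iff] at hsk ⊢
    omega
  have hcl := mem_closure_seg_of_isCircuit_seg (s := s) (k := k) (h.isCircuit_seg ht hstart) hpos
    (by omega) (by omega)
  rw [seg_succ, ← M.eRk_insert_closure_eq, insert_eq_of_mem hcl, M.eRk_closure_eq]

lemma eRk_seg_succ_of_even (h : OddTCycOrd M t e) (ht : Odd t) (hsk : Even (s + k))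
    (hk : k + t ≤ n) : M.eRk (seg e s (k + 1)) = M.eRk (seg e s k) + 1 := by
  rw [seg_succ]
  exact Matroid.eRk_insert_eq_add_one ⟨h.1.2 ▸ mem_range_self _,
    notMem_closure_seg_of_isCocircuit_seg h.1.1 (h.isCocircuit_seg ht hsk) ht.pos hk⟩

lemma eRk_seg_add_two (h : OddTCycOrd M t e) (ht : Odd t) (hk : t - 1 ≤ k)
    (hkn : k + 1 + t ≤ n) : M.eRk (seg e s (k + 2)) = M.eRk (seg e s k) + 1 := by
  rcases Int.even_or_odd (s + k) with hsk | hsk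
  · have hsk' : Odd (s + (k + 1 : ℕ)) := by push_cast; rw [← add_assoc]; exact hsk.add_one
    rw [h.eRk_seg_succ_of_odd ht hsk' (by omega), h.eRk_seg_succ_of_even ht hsk (by omega)]
  · have hsk' : Even (s + (k + 1 : ℕ)) := by push_cast; rw [← add_assoc]; exact hsk.add_one
    rw [h.eRk_seg_succ_of_even ht hsk' hkn, h.eRk_seg_succ_of_odd ht hsk hk]

lemma eRk_seg_add_two_mul (h : OddTCycOrd M t e) (ht : Odd t) {m : ℕ}
    (hm : t - 1 + 2 * m + (t - 1) ≤ n) :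
    M.eRk (seg e s (t - 1 + 2 * m)) = (t - 1 + m : ℕ) := by
  induction m with
  | zero =>
    rw [mul_zero, add_zero, (h.indep_seg ht).eRk_eq_encard,
      ← finite_seg.cast_ncard_eq, ncard_seg h.1.1 (by omega)]
  | succ m ih =>
    have hpos := ht.pos
    rw [mul_add_one, ← add_assoc, h.eRk_seg_add_two ht (by omega) (by omega), ih (by omega),
      ← add_assoc, Nat.cast_succ]

lemma eRk_seg_add_two_mul_add_one_of_odd (h : OddTCycOrd M t e) (ht : Odd t) (hs : Odd s) {m : ℕ}
    (hm : t - 1 + 2 * m + (t - 1) ≤ n) :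
    M.eRk (seg e s (t - 1 + 2 * m + 1)) = (t - 1 + m : ℕ) := by
  have hlast : Odd (s + (t - 1 + 2 * m : ℕ)) :=
    hs.add_even (mod_cast ht.tsub_odd odd_one |>.add (even_two_mul m))
  rw [h.eRk_seg_succ_of_odd ht hlast (by omega), h.eRk_seg_add_two_mul ht hm]

lemma eRk_seg_add_two_mul_add_one_of_even (h : OddTCycOrd M t e) (ht : Odd t) (hs : Even s)
    {m : ℕ} (hm : t - 1 + 2 * m + t ≤ n) :
    M.eRk (seg e s (t - 1 + 2 * m + 1)) = (t + m : ℕ) := by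
  have hpos := ht.pos
  have hlast : Even (s + (t - 1 + 2 * m : ℕ)) :=
    hs.add (mod_cast ht.tsub_odd odd_one |>.add (even_two_mul m))
  rw [h.eRk_seg_succ_of_even ht hlast hm, h.eRk_seg_add_two_mul ht (by omega), ← Nat.cast_succ]
  congr 1
  omega

end OddTCycOrd

end Matroid

/-- Let `t ≥ 3` be odd and `e` an odd `t`-cyclic ordering of `M`. If
`P = {e_{i+1},…,e_{i+k}}` with `|P| ≥ t-1` and `|E(M) - P| ≥ t-1`, then
`r(P) = (|P|+t-1)/2` if `|P|` is even, `r(P) = (|P|+t-2)/2` if `i+1` is odd and `|P|` odd,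
and `r(P) = (|P|+t)/2` if `i+1` is even and `|P|` odd. -/
theorem statement_12 (M : Matroid α) (t n : ℕ) (ht : 3 ≤ t) (htodd : Odd t)
    (e : ZMod n → α) (he : OddTCycOrd M t e) (i k : ℕ) (hk : k ≤ n)
    (P : Set α) (hP : P = seg e ((i : ℤ) + 1) k)
    (hsize : t - 1 ≤ k) (hcosize : t - 1 ≤ (M.E \ P).ncard) :
    (Even k → 2 * rkf M P = k + t - 1) ∧
    (Odd (i + 1) → Odd k → 2 * rkf M P = k + t - 2) ∧
    (Even (i + 1) → Odd k → 2 * rkf M P = k + t) := by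
  subst hP
  rw [he.1.ncard_ground_sdiff_seg hk] at hcosize
  have cast_rkf := cast_rkf_eq_eRk (M := M) (finite_seg (e := e) (s := i + 1) (k := k))
  have ht_mod := Nat.odd_iff.1 htodd
  refine ⟨fun hk_even ↦ ?_, fun hi hk_odd ↦ ?_, fun hi hk_odd ↦ ?_⟩
  · rw [Nat.even_iff] at hk_even
    obtain ⟨m, rfl⟩ : ∃ m, k = t - 1 + 2 * m := ⟨(k - (t - 1)) / 2, by omega⟩
    rw [he.eRk_seg_add_two_mul htodd (by omega), Nat.cast_inj] at cast_rkf
    omega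
  · rw [Nat.odd_iff] at hk_odd
    obtain ⟨m, rfl⟩ : ∃ m, k = t - 1 + 2 * m + 1 := ⟨(k - t) / 2, by omega⟩
    rw [he.eRk_seg_add_two_mul_add_one_of_odd htodd (mod_cast hi) (by omega),
      Nat.cast_inj] at cast_rkf
    omega
  · rw [Nat.odd_iff] at hk_odd
    obtain ⟨m, rfl⟩ : ∃ m, k = t - 1 + 2 * m + 1 := ⟨(k - t) / 2, by omega⟩
    rw [he.eRk_seg_add_two_mul_add_one_of_even htodd (mod_cast hi) (by omega),
      Nat.cast_inj] at cast_rkf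
    omega

end CyclicArr
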